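/- arXiv:1910.14230 — 4 statements merged into one kernel-verified Lean document; each statement's English description precedes it below -/
import Mathlib

section
/- Let A be a complete normed ℝ-algebra with unit, and let f₁, f₂ : ℝ → A be continuous. Let h₁, h₂, h₁₂ : ℝ → A be differentiable curves with h₁(0) = h₂(0) = h₁₂(0) = 1, satisfying h₁'(s) = f₁(s)·h₁(s) and h₂'(s) = f₂(s)·h₂(s) for all s, and suppose each h₁(s) is invertible in A and h₁₂'(s) = (f₁(s) + h₁(s)·f₂(s)·h₁(s)⁻¹)·h₁₂(s) for all s. Then h₁₂(s) = h₁(s)·h₂(s) for all s ∈ ℝ. (This is the analytic core of the horizontal composition formula tra(Σ₂ ∘ Σ₁) = tra(Σ₁)·tra(Σ₂) of Proposition 2-8(c): the path-ordered exponential of f₁ + Ad_{h₁}f₂ is the product of the path-ordered exponentials of f₁ and f₂.) -/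
/-!
By the product rule,
`(h₁ h₂)' = f₁ h₁ h₂ + h₁ f₂ h₂ = (f₁ + h₁ f₂ h₁⁻¹) (h₁ h₂)`,
so `h₁ h₂` solves the linear ODE that defines `h₁₂`, with the same initial value `1`. The
coefficient `f₁ + h₁ f₂ h₁⁻¹` is continuous because inversion is continuous at units of a complete
normed ring, so Grönwall uniqueness (`linear_ode_unique`) gives the equality.
-/

/-- Global uniqueness for the linear ODE `x' = g x`. The norm `‖g‖` need not be bounded on `ℝ`, but
it is bounded on each compact interval, which gives a uniform Lipschitz constant there. -/
theorem linear_ode_unique {A : Type*} [NormedRing A] [NormedAlgebra ℝ A]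
    {g x y : ℝ → A} (hg : Continuous g)
    (hx : ∀ s, HasDerivAt x (g s * x s) s) (hy : ∀ s, HasDerivAt y (g s * y s) s)
    (h0 : x 0 = y 0) (s : ℝ) : x s = y s := by
  obtain ⟨C, hC⟩ := (isCompact_Icc (a := -(|s| + 1)) (b := |s| + 1)).exists_bound_of_continuousOn
    hg.continuousOn
  have hs : s ∈ Set.Ioo (-(|s| + 1)) (|s| + 1) := abs_lt.1 (lt_add_one |s|)
  have h0s : (0 : ℝ) ∈ Set.Ioo (-(|s| + 1)) (|s| + 1) := by
    constructor <;> linarith [abs_nonneg s]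
  refine ODE_solution_unique_of_mem_Ioo (v := fun t a => g t * a) (s := fun _ => Set.univ)
    (K := C.toNNReal) (fun t ht => ?_) h0s
    (fun t _ => ⟨hx t, trivial⟩) (fun t _ => ⟨hy t, trivial⟩) h0 hs
  refine (LipschitzWith.of_dist_le_mul fun a b => ?_).lipschitzOnWith
  rw [dist_eq_norm, dist_eq_norm, ← mul_sub]
  refine (norm_mul_le _ _).trans ?_
  gcongr
  exact (hC t (Set.Ioo_subset_Icc_self ht)).trans (Real.le_coe_toNNReal C)

/-- Proposition 2-8(c), analytic core. The path-ordered exponential of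
`f₁ + Ad_{h₁} f₂` is the product of the path-ordered exponentials of `f₁` and `f₂`. -/
theorem path_ordered_exponential_of_adjoint_sum
    {A : Type*} [NormedRing A] [NormedAlgebra ℝ A] [CompleteSpace A]
    (f₁ f₂ : ℝ → A) (hf₁ : Continuous f₁) (hf₂ : Continuous f₂)
    (h₁ h₂ h₁₂ : ℝ → A)
    (h₁0 : h₁ 0 = 1) (h₂0 : h₂ 0 = 1) (h₁₂0 : h₁₂ 0 = 1)
    (hd₁ : ∀ s : ℝ, HasDerivAt h₁ (f₁ s * h₁ s) s)
    (hd₂ : ∀ s : ℝ, HasDerivAt h₂ (f₂ s * h₂ s) s)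
    (hinv : ∀ s : ℝ, IsUnit (h₁ s))
    (hd₁₂ : ∀ s : ℝ,
      HasDerivAt h₁₂ ((f₁ s + h₁ s * f₂ s * (hinv s).unit⁻¹) * h₁₂ s) s) :
    ∀ s : ℝ, h₁₂ s = h₁ s * h₂ s := by
  have hh₁ : Continuous h₁ := continuous_iff_continuousAt.2 fun s => (hd₁ s).continuousAt
  have hinvc : Continuous fun s => (((hinv s).unit⁻¹ : Aˣ) : A) := by
    -- `Ring.inverse` is a total function on `A` that agrees with the inverse at units.
    have heq : (fun s => (((hinv s).unit⁻¹ : Aˣ) : A)) = fun s => Ring.inverse (h₁ s) := by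
      funext s
      rw [← Ring.inverse_unit, IsUnit.unit_spec]
    rw [heq]
    exact continuous_iff_continuousAt.2 fun s =>
      ContinuousAt.comp (f := h₁) (g := Ring.inverse)
        (NormedRing.inverse_continuousAt (hinv s).unit) hh₁.continuousAt
  refine linear_ode_unique (hf₁.add ((hh₁.mul hf₂).mul hinvc)) hd₁₂ (fun s => ?_)
    (by rw [h₁₂0, h₁0, h₂0, one_mul])
  convert! (hd₁ s).mul (hd₂ s) using 1
  have hcancel : (((hinv s).unit⁻¹ : Aˣ) : A) * h₁ s = 1 := (hinv s).val_inv_mul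
  change (f₁ s + h₁ s * f₂ s * (((hinv s).unit⁻¹ : Aˣ) : A)) * (h₁ s * h₂ s) = _
  rw [add_mul, mul_assoc (h₁ s * f₂ s), ← mul_assoc (((hinv s).unit⁻¹ : Aˣ) : A), hcancel,
    one_mul, mul_assoc (h₁ s), mul_assoc (f₁ s)]
end

section
/- In a crossed 2-module (G, H, L, δ, ∂, ▷_H, ▷_L, {-,-}), the operation h ▷' l := l·{δ(l)⁻¹, h} defines a left action of the group H on the group L by group automorphisms: for all h, h₁, h₂ ∈ H and l, l₁, l₂ ∈ L one has 1_H ▷' l = l, (h₁·h₂) ▷' l = h₁ ▷' (h₂ ▷' l), and h ▷' (l₁·l₂) = (h ▷' l₁)·(h ▷' l₂). (This is the first part of the claim in Definition 3-1 that (H, L, δ, ▷') forms a crossed module.) -/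
/-!
Since `∂ ∘ δ` is trivial, the identities for the Peiffer lifting lose their `G`-actions when the
first argument lies in the image of `δ`: one has `δ{δ(m), h} = [δ(m), h]`,
`{δ(m₁m₂), h} = {δ(m₁), δ(m₂)hδ(m₂)⁻¹}·{δ(m₂), h}` (`br_dl_mul`) and
`{δ(m), hk} = {δ(m), h}·{δ(m), k}·{δ{δ(m), k}⁻¹, h}` (`br_dl_mul_right`).

Multiplicativity in `l`: put `c = {δ(l₁)⁻¹, h}`, so that `δ(l₁)⁻¹hδ(l₁) = δ(c)h`. With `m = l₂⁻¹` and
`x = {δ(m), h}` the two identities give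
`{δ(l₁l₂)⁻¹, h} = {δ(m), δ(c)h}·c = [m, c]·x·[x⁻¹, c]·c = m c m⁻¹ x`,
and multiplying by `l₁l₂` on the left yields `l₁c·l₂x`.

Compatibility with products in `H`: with `x = {δ(l)⁻¹, h₂}`, the second identity reads
`h₁h₂ ▷' l = (h₁ ▷' l)·(h₁ ▷' x)`, which is `h₁ ▷' (l x) = h₁ ▷' (h₂ ▷' l)` by multiplicativity.
-/


/-- A crossed 2-module `(G, H, L, δ, ∂, ▷_H, ▷_L, {-,-})` at the purely group-theoretic
level (Definition 3-1 of the paper). The field `dl` is `δ : L → H`, the field `dh` is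
`∂ : H → G`, `actH` is `▷_H`, `actL` is `▷_L`, and `br` is the Peiffer lifting `{-,-}`. -/
structure CrossedTwoModule (G H L : Type*) [Group G] [Group H] [Group L] where
  /-- The homomorphism `δ : L → H`. -/
  dl : L →* H
  /-- The homomorphism `∂ : H → G`. -/
  dh : H →* G
  /-- `∂ ∘ δ` is trivial. -/
  comp_trivial : ∀ l : L, dh (dl l) = 1
  /-- The action `▷_H` of `G` on `H` by automorphisms. -/
  actH : G →* MulAut H
  /-- The action `▷_L` of `G` on `L` by automorphisms. -/
  actL : G →* MulAut L
  /-- The Peiffer lifting `{-,-} : H × H → L`. -/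
  br : H → H → L
  /-- (a) `δ` is equivariant: `δ(g ▷_L l) = g ▷_H δ(l)`. -/
  dl_equivariant : ∀ (g : G) (l : L), dl (actL g l) = actH g (dl l)
  /-- (a) `∂` is equivariant: `∂(g ▷_H h) = g·∂(h)·g⁻¹`. -/
  dh_equivariant : ∀ (g : G) (h : H), dh (actH g h) = g * dh h * g⁻¹
  /-- (b) the Peiffer lifting is equivariant: `g ▷_L {h₁, h₂} = {g ▷_H h₁, g ▷_H h₂}`. -/
  br_equivariant : ∀ (g : G) (h₁ h₂ : H), actL g (br h₁ h₂) = br (actH g h₁) (actH g h₂)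
  /-- (c) `δ{h₁, h₂}` is the Peiffer commutator `⟨h₁, h₂⟩ = (h₁h₂h₁⁻¹)·(∂(h₁) ▷_H h₂⁻¹)`. -/
  dl_br : ∀ h₁ h₂ : H, dl (br h₁ h₂) = (h₁ * h₂ * h₁⁻¹) * actH (dh h₁) h₂⁻¹
  /-- (d) `{δ(l₁), δ(l₂)} = l₁l₂l₁⁻¹l₂⁻¹`. -/
  br_dl_dl : ∀ l₁ l₂ : L, br (dl l₁) (dl l₂) = l₁ * l₂ * l₁⁻¹ * l₂⁻¹
  /-- (e), first identity: `{h₁·h₂, h₃} = {h₁, h₂h₃h₂⁻¹}·(∂(h₁) ▷_L {h₂, h₃})`. -/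
  br_mul_left : ∀ h₁ h₂ h₃ : H,
    br (h₁ * h₂) h₃ = br h₁ (h₂ * h₃ * h₂⁻¹) * actL (dh h₁) (br h₂ h₃)
  /-- (e), second identity:
  `{h₁, h₂·h₃} = {h₁, h₂}·{h₁, h₃}·{⟨h₁, h₃⟩⁻¹, ∂(h₁) ▷_H h₂}`. -/
  br_mul_right : ∀ h₁ h₂ h₃ : H,
    br h₁ (h₂ * h₃) = br h₁ h₂ * br h₁ h₃ *
      br ((h₁ * h₃ * h₁⁻¹) * actH (dh h₁) h₃⁻¹)⁻¹ (actH (dh h₁) h₂)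
  /-- (f): `{δ(l), h}·{h, δ(l)} = l·(∂(h) ▷_L l⁻¹)`. -/
  br_dl : ∀ (h : H) (l : L), br (dl l) h * br h (dl l) = l * actL (dh h) l⁻¹

/-- The operation `h ▷' l := l·{δ(l)⁻¹, h}`. -/
def CrossedTwoModule.act' {G H L : Type*} [Group G] [Group H] [Group L]
    (𝒞 : CrossedTwoModule G H L) (h : H) (l : L) : L :=
  l * 𝒞.br (𝒞.dl l)⁻¹ h

namespace CrossedTwoModule

variable {G H L : Type*} [Group G] [Group H] [Group L] (𝒞 : CrossedTwoModule G H L)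

theorem dl_br_dl (m : L) (h : H) :
    𝒞.dl (𝒞.br (𝒞.dl m) h) = 𝒞.dl m * h * (𝒞.dl m)⁻¹ * h⁻¹ := by
  simp [𝒞.dl_br, 𝒞.comp_trivial]

theorem br_dl_mul (m₁ m₂ : L) (h : H) :
    𝒞.br (𝒞.dl (m₁ * m₂)) h =
      𝒞.br (𝒞.dl m₁) (𝒞.dl m₂ * h * (𝒞.dl m₂)⁻¹) * 𝒞.br (𝒞.dl m₂) h := by
  rw [map_mul, 𝒞.br_mul_left, 𝒞.comp_trivial, map_one, MulAut.one_apply]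

theorem br_dl_mul_right (m : L) (h k : H) :
    𝒞.br (𝒞.dl m) (h * k) =
      𝒞.br (𝒞.dl m) h * 𝒞.br (𝒞.dl m) k * 𝒞.br (𝒞.dl (𝒞.br (𝒞.dl m) k)⁻¹) h := by
  rw [𝒞.br_mul_right, ← 𝒞.dl_br, 𝒞.comp_trivial, map_one, MulAut.one_apply, map_inv]

theorem br_one_right (h : H) : 𝒞.br h 1 = 1 := by
  have h₁ : 𝒞.br 1 1 = 1 := by simpa using 𝒞.br_dl_dl 1 1
  simpa [h₁] using 𝒞.br_mul_right h 1 1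

theorem act'_eq (h : H) (l : L) : 𝒞.act' h l = l * 𝒞.br (𝒞.dl l⁻¹) h := by
  rw [act', map_inv]

theorem act'_mul (h : H) (l₁ l₂ : L) : 𝒞.act' h (l₁ * l₂) = 𝒞.act' h l₁ * 𝒞.act' h l₂ := by
  have hc : 𝒞.dl l₁⁻¹ * h * (𝒞.dl l₁⁻¹)⁻¹ = 𝒞.dl (𝒞.br (𝒞.dl l₁⁻¹) h) * h := by
    rw [dl_br_dl, inv_mul_cancel_right]
  rw [act'_eq, act'_eq, act'_eq, mul_inv_rev, br_dl_mul, hc, br_dl_mul_right,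
    𝒞.br_dl_dl, 𝒞.br_dl_dl]
  group

theorem act'_mul_left (h₁ h₂ : H) (l : L) :
    𝒞.act' (h₁ * h₂) l = 𝒞.act' h₁ (𝒞.act' h₂ l) := by
  rw [𝒞.act'_eq h₂ l, act'_mul, act'_eq, act'_eq, act'_eq, br_dl_mul_right]
  simp only [mul_assoc]

end CrossedTwoModule

/-- Definition 3-1. In a crossed 2-module, `h ▷' l := l·{δ(l)⁻¹, h}`
defines a left action of `H` on `L` by group automorphisms. -/
theorem CrossedTwoModule.act'_is_action_by_automorphisms
    {G H L : Type*} [Group G] [Group H] [Group L]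
    (𝒞 : CrossedTwoModule G H L) :
    (∀ l : L, 𝒞.act' 1 l = l) ∧
    (∀ (h₁ h₂ : H) (l : L), 𝒞.act' (h₁ * h₂) l = 𝒞.act' h₁ (𝒞.act' h₂ l)) ∧
    (∀ (h : H) (l₁ l₂ : L), 𝒞.act' h (l₁ * l₂) = 𝒞.act' h l₁ * 𝒞.act' h l₂) := by
  exact ⟨fun l => by rw [act'_eq, br_one_right, mul_one], 𝒞.act'_mul_left, 𝒞.act'_mul⟩
end

section
/- In a differential crossed 2-module (𝔤, 𝔥, 𝔩, δ, ∂, ▷_H, ▷_L, {-,-}), for each v ∈ 𝔥 the map x ↦ v ▷' x := −{δ(x), v} is a derivation of the Lie algebra 𝔩: for all v ∈ 𝔥 and x₁, x₂ ∈ 𝔩 one has v ▷' [x₁, x₂] = [v ▷' x₁, x₂] + [x₁, v ▷' x₂]. (This is part of the claim in Definition 3-2 that (𝔥, 𝔩, δ, ▷') forms a differential crossed module.) -/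
/-- A differential crossed 2-module `(𝔤, 𝔥, 𝔩, δ, ∂, ▷_H, ▷_L, {-,-})` in the sense of
Definition 3-2 of the paper. The field `dl` is `δ : 𝔩 → 𝔥`, the field `dh` is
`∂ : 𝔥 → 𝔤`, `actH` is `▷_H`, `actL` is `▷_L`, and `br` is the Peiffer lifting. -/
structure DiffCrossedTwoModule (𝔤 𝔥 𝔩 : Type*)
    [LieRing 𝔤] [LieAlgebra ℝ 𝔤] [LieRing 𝔥] [LieAlgebra ℝ 𝔥]
    [LieRing 𝔩] [LieAlgebra ℝ 𝔩] where
  /-- The Lie algebra homomorphism `δ : 𝔩 → 𝔥`. -/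
  dl : 𝔩 →ₗ⁅ℝ⁆ 𝔥
  /-- The Lie algebra homomorphism `∂ : 𝔥 → 𝔤`. -/
  dh : 𝔥 →ₗ⁅ℝ⁆ 𝔤
  /-- `∂ ∘ δ = 0`. -/
  comp_trivial : ∀ x : 𝔩, dh (dl x) = 0
  /-- The action `▷_H` of `𝔤` on `𝔥`, as a bilinear map. -/
  actH : 𝔤 →ₗ[ℝ] 𝔥 →ₗ[ℝ] 𝔥
  /-- `▷_H` is a Lie algebra action: `⁅X, Y⁆ ▷_H v = X ▷_H (Y ▷_H v) − Y ▷_H (X ▷_H v)`. -/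
  actH_lie : ∀ (X Y : 𝔤) (v : 𝔥),
    actH ⁅X, Y⁆ v = actH X (actH Y v) - actH Y (actH X v)
  /-- Each `X ▷_H ·` is a derivation of `𝔥`. -/
  actH_der : ∀ (X : 𝔤) (v w : 𝔥), actH X ⁅v, w⁆ = ⁅actH X v, w⁆ + ⁅v, actH X w⁆
  /-- The action `▷_L` of `𝔤` on `𝔩`, as a bilinear map. -/
  actL : 𝔤 →ₗ[ℝ] 𝔩 →ₗ[ℝ] 𝔩
  /-- `▷_L` is a Lie algebra action. -/
  actL_lie : ∀ (X Y : 𝔤) (x : 𝔩),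
    actL ⁅X, Y⁆ x = actL X (actL Y x) - actL Y (actL X x)
  /-- Each `X ▷_L ·` is a derivation of `𝔩`. -/
  actL_der : ∀ (X : 𝔤) (x y : 𝔩), actL X ⁅x, y⁆ = ⁅actL X x, y⁆ + ⁅x, actL X y⁆
  /-- The Peiffer lifting `{-,-} : 𝔥 × 𝔥 → 𝔩`, a bilinear map. -/
  br : 𝔥 →ₗ[ℝ] 𝔥 →ₗ[ℝ] 𝔩
  /-- (a) `δ(X ▷_L x) = X ▷_H δ(x)`. -/
  dl_equivariant : ∀ (X : 𝔤) (x : 𝔩), dl (actL X x) = actH X (dl x)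
  /-- (a) `∂(X ▷_H v) = ⁅X, ∂(v)⁆`. -/
  dh_equivariant : ∀ (X : 𝔤) (v : 𝔥), dh (actH X v) = ⁅X, dh v⁆
  /-- (b) `X ▷_L {v₁, v₂} = {X ▷_H v₁, v₂} + {v₁, X ▷_H v₂}`. -/
  br_equivariant : ∀ (X : 𝔤) (v₁ v₂ : 𝔥),
    actL X (br v₁ v₂) = br (actH X v₁) v₂ + br v₁ (actH X v₂)
  /-- (c) `δ{v₁, v₂} = ⟨v₁, v₂⟩ = ⁅v₁, v₂⁆ − ∂(v₁) ▷_H v₂`. -/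
  dl_br : ∀ v₁ v₂ : 𝔥, dl (br v₁ v₂) = ⁅v₁, v₂⁆ - actH (dh v₁) v₂
  /-- (d) `⁅x₁, x₂⁆ = {δ(x₁), δ(x₂)}`. -/
  lie_eq_br_dl_dl : ∀ x₁ x₂ : 𝔩, ⁅x₁, x₂⁆ = br (dl x₁) (dl x₂)
  /-- (e), first identity:
  `{⁅v₁, v₂⁆, v₃} = ∂(v₁) ▷_L {v₂, v₃} + {v₁, ⁅v₂, v₃⁆} − ∂(v₂) ▷_L {v₁, v₃} − {v₂, ⁅v₁, v₃⁆}`. -/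
  br_lie_left : ∀ v₁ v₂ v₃ : 𝔥,
    br ⁅v₁, v₂⁆ v₃ =
      actL (dh v₁) (br v₂ v₃) + br v₁ ⁅v₂, v₃⁆ - actL (dh v₂) (br v₁ v₃) - br v₂ ⁅v₁, v₃⁆
  /-- (e), second identity: `{v₁, ⁅v₂, v₃⁆} = {⟨v₁, v₂⟩, v₃} − {⟨v₁, v₃⟩, v₂}`. -/
  br_lie_right : ∀ v₁ v₂ v₃ : 𝔥,
    br v₁ ⁅v₂, v₃⁆ =
      br (⁅v₁, v₂⁆ - actH (dh v₁) v₂) v₃ - br (⁅v₁, v₃⁆ - actH (dh v₁) v₃) v₂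
  /-- (f) `{δ(x), v} + {v, δ(x)} = −(∂(v) ▷_L x)`. -/
  br_dl_add : ∀ (v : 𝔥) (x : 𝔩), br (dl x) v + br v (dl x) = - actL (dh v) x

/-- The operation `v ▷' x := −{δ(x), v}`. -/
def DiffCrossedTwoModule.act' {𝔤 𝔥 𝔩 : Type*}
    [LieRing 𝔤] [LieAlgebra ℝ 𝔤] [LieRing 𝔥] [LieAlgebra ℝ 𝔥]
    [LieRing 𝔩] [LieAlgebra ℝ 𝔩]
    (𝒟 : DiffCrossedTwoModule 𝔤 𝔥 𝔩) (v : 𝔥) (x : 𝔩) : 𝔩 :=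
  - 𝒟.br (𝒟.dl x) v

/-- Definition 3-2. In a differential crossed 2-module, for each
`v ∈ 𝔥` the map `x ↦ v ▷' x := −{δ(x), v}` is a derivation of `𝔩`. -/
theorem DiffCrossedTwoModule.act'_derivation {𝔤 𝔥 𝔩 : Type*}
    [LieRing 𝔤] [LieAlgebra ℝ 𝔤] [LieRing 𝔥] [LieAlgebra ℝ 𝔥]
    [LieRing 𝔩] [LieAlgebra ℝ 𝔩]
    (𝒟 : DiffCrossedTwoModule 𝔤 𝔥 𝔩) :
    ∀ (v : 𝔥) (x₁ x₂ : 𝔩),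
      𝒟.act' v ⁅x₁, x₂⁆ = ⁅𝒟.act' v x₁, x₂⁆ + ⁅x₁, 𝒟.act' v x₂⁆ := by
  intro v x₁ x₂
  -- Since `∂ ∘ δ = 0`, Peiffer commutators with first entry `δ x` are plain brackets, so the
  -- claim is the second identity of (e) at `(δ x₁, δ x₂, v)`, carried over by (d).
  have h := 𝒟.br_lie_right (𝒟.dl x₁) (𝒟.dl x₂) v
  simp only [𝒟.comp_trivial, map_zero, LinearMap.zero_apply, sub_zero] at h
  simp only [DiffCrossedTwoModule.act', 𝒟.lie_eq_br_dl_dl (- _) _, 𝒟.lie_eq_br_dl_dl _ (- _),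
    LieHom.map_lie, map_neg, LinearMap.neg_apply, 𝒟.dl_br, 𝒟.comp_trivial, map_zero,
    LinearMap.zero_apply, sub_zero, h]
  abel
end

section
/- In a differential crossed 2-module (𝔤, 𝔥, 𝔩, δ, ∂, ▷_H, ▷_L, {-,-}), the operation v ▷' x := −{δ(x), v} defines a Lie algebra action of 𝔥 on 𝔩: for all v₁, v₂ ∈ 𝔥 and x ∈ 𝔩 one has [v₁, v₂] ▷' x = v₁ ▷' (v₂ ▷' x) − v₂ ▷' (v₁ ▷' x). (This is part of the claim in Definition 3-2 that (𝔥, 𝔩, δ, ▷') forms a differential crossed module.) -/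
/-- Definition 3-2. In a differential crossed 2-module,
`v ▷' x := −{δ(x), v}` defines a Lie algebra action of `𝔥` on `𝔩`. -/
theorem DiffCrossedTwoModule.act'_lie_action {𝔤 𝔥 𝔩 : Type*}
    [LieRing 𝔤] [LieAlgebra ℝ 𝔤] [LieRing 𝔥] [LieAlgebra ℝ 𝔥]
    [LieRing 𝔩] [LieAlgebra ℝ 𝔩]
    (𝒟 : DiffCrossedTwoModule 𝔤 𝔥 𝔩) :
    ∀ (v₁ v₂ : 𝔥) (x : 𝔩),
      𝒟.act' ⁅v₁, v₂⁆ x = 𝒟.act' v₁ (𝒟.act' v₂ x) - 𝒟.act' v₂ (𝒟.act' v₁ x) := by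
  intro v₁ v₂ x
  simp only [DiffCrossedTwoModule.act', map_neg, LinearMap.neg_apply, neg_neg,
    𝒟.br_lie_right, 𝒟.dl_br]
  abel
end
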